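/- For all integers g ≥ 1 and natural numbers m, n, the subspace V₁^{(g,m,n)} is the internal direct sum of V₊^{(g,m,n)} and V₋^{(g,m,n)}: one has V₊^{(g,m,n)} ∩ V₋^{(g,m,n)} = {0} and V₊^{(g,m,n)} + V₋^{(g,m,n)} = V₁^{(g,m,n)}. -/

import Mathlib

open MvPolynomial

noncomputable section

/-- `K = ℂ(z₁,z₂)`, the field of rational functions in two variables over `ℂ`. -/
abbrev K2 : Type := FractionRing (MvPolynomial (Fin 2) ℂ)

/-- The rational function `z₁`. -/
def z1 : K2 := algebraMap (MvPolynomial (Fin 2) ℂ) K2 (X 0)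

/-- The rational function `z₂`. -/
def z2 : K2 := algebraMap (MvPolynomial (Fin 2) ℂ) K2 (X 1)

/-- The conifold discriminant `Δ₁ = (1−432z₁)³ − 27·(432z₁)³·z₂`. -/
def Δ1 : K2 := (1 - 432 * z1) ^ 3 - 27 * (432 * z1) ^ 3 * z2

/-- The conifold discriminant `Δ₂ = 1 + 27z₂`. -/
def Δ2 : K2 := 1 + 27 * z2

/-- `V₀^{(g,m,n)}`: the ℂ-span of `z₁^k (1/432−z₁)^{m−k} z₂^n (Δ₁Δ₂)^{−(2g−2)}` for `0 ≤ k ≤ m`. -/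
def V0 (g : ℤ) (m n : ℕ) : Submodule ℂ K2 :=
  Submodule.span ℂ
    {f : K2 | ∃ k : ℕ, k ≤ m ∧
      f = z1 ^ k * (1 / 432 - z1) ^ (m - k) * z2 ^ n * (Δ1 * Δ2) ^ (-(2 * g - 2))}

/-- `V₁^{(g,m,n)} = {f ∈ V₀^{(g,m,n)} : ι(f) ∈ V₀^{(g,m,n)}}`. -/
def V1 (ι : K2 →ₐ[ℂ] K2) (g : ℤ) (m n : ℕ) : Submodule ℂ K2 :=
  V0 g m n ⊓ (V0 g m n).comap ι.toLinearMap

/-- `V₊^{(g,m,n)}`: the ℂ-span of `z₁^{k₁}(1/432−z₁)^{k₂} z₂^n (Δ₁Δ₂)^{−(2g−2)}`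
over all `k₁, k₂ ≥ 0` with `k₁+k₂ ≤ m` and `k₁−k₂ = 3n−6g+6`. -/
def Vplus (g : ℤ) (m n : ℕ) : Submodule ℂ K2 :=
  Submodule.span ℂ
    {f : K2 | ∃ k₁ k₂ : ℕ, k₁ + k₂ ≤ m ∧ (k₁ : ℤ) - k₂ = 3 * n - 6 * g + 6 ∧
      f = z1 ^ k₁ * (1 / 432 - z1) ^ k₂ * z2 ^ n * (Δ1 * Δ2) ^ (-(2 * g - 2))}

/-- `V₋^{(g,m,n)}`: the ℂ-span of `(1/432−2z₁)·z₁^{k₁}(1/432−z₁)^{k₂} z₂^n (Δ₁Δ₂)^{−(2g−2)}`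
over all `k₁, k₂ ≥ 0` with `k₁+k₂ ≤ m−1` and `k₁−k₂ = 3n−6g+6`. -/
def Vminus (g : ℤ) (m n : ℕ) : Submodule ℂ K2 :=
  Submodule.span ℂ
    {f : K2 | ∃ k₁ k₂ : ℕ, k₁ + k₂ + 1 ≤ m ∧ (k₁ : ℤ) - k₂ = 3 * n - 6 * g + 6 ∧
      f = (1 / 432 - 2 * z1) * z1 ^ k₁ * (1 / 432 - z1) ^ k₂ * z2 ^ n *
            (Δ1 * Δ2) ^ (-(2 * g - 2))}

/-!
Put `x = z₁`, `y = 1/432 - z₁`, `w = z₂ⁿ(Δ₁Δ₂)^{-(2g-2)}`, `e = 3n - 6g + 6`. The involution swaps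
`x` and `y`, and `ι w = (-1)ⁿ (x/y)ᵉ w`. Hence, for `i - j = e`, it multiplies `xⁱyʲw` by `(-1)ⁿ`
and `xⁱyʲ(y - x)w` by `-(-1)ⁿ`: the spaces `V₊` and `V₋` lie in different eigenspaces of `ι`, so
they are disjoint and contained in `V₁`.

Conversely, an element of `V₀` is `p(x)w` with `deg p ≤ m`. If its image is `q(y)w`, then
`(-1)ⁿ p(y)(x/y)ᵉ = q(y)`. Write `e = i - j` with `i = 0` or `j = 0`; as `x` and `y` are coprime
polynomials in `y`, the monomial `yⁱxʲ` divides `p(y)`, that is, `xⁱyʲ` divides `p(x)`. In the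
quotient, `x² = (x + y)x - xy` and `2x = (x + y) - (y - x)`, where `x + y` is constant, reduce the
powers of `x` to products of powers of `xy` with `1` or `y - x`.
-/

theorem pow_mul_pow_dvd_of_mul_eq_mul {R : Type*} [CommRing R] {u v p q : R}
    (huv : IsCoprime u v) {i j : ℕ} (hij : i = 0 ∨ j = 0)
    (h : p * (u ^ j * v ^ i) = q * (u ^ i * v ^ j)) : u ^ i * v ^ j ∣ p := by
  have hcop : IsCoprime (u ^ i * v ^ j) (u ^ j * v ^ i) := by
    rcases hij with rfl | rfl
    · simpa using huv.symm.pow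
    · simpa using huv.pow
  exact hcop.dvd_of_dvd_mul_right (h ▸ dvd_mul_left _ _)

theorem le_comap_of_le_eigenspace {R M : Type*} [CommRing R] [AddCommGroup M]
    [Module R M] {T : Module.End R M} {c : R} {U V : Submodule R M} (hUV : U ≤ V)
    (hU : U ≤ T.eigenspace c) : U ≤ V.comap T := fun f hf ↦ by
  rw [Submodule.mem_comap, Module.End.mem_eigenspace_iff.mp (hU hf)]
  exact V.smul_mem c (hUV hf)

theorem ne_zero_of_transcendental {R A : Type*} [CommRing R] [Nontrivial R] [Ring A] [Algebra R A]
    {x : A} (hx : Transcendental R x) : x ≠ 0 := fun h ↦ hx (h ▸ isAlgebraic_zero)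

theorem isCoprime_X_C_sub_X {R : Type*} [CommRing R] {a : R} (ha : IsUnit a) :
    IsCoprime (Polynomial.X : Polynomial R) (Polynomial.C a - Polynomial.X) := by
  obtain ⟨b, hb⟩ := ha.exists_left_inv
  refine ⟨Polynomial.C b, Polynomial.C b, ?_⟩
  rw [← mul_add, add_sub_cancel, ← Polynomial.C_mul, hb, Polynomial.C_1]

theorem degree_X_pow_mul_C_sub_X_pow {R : Type*} [CommRing R] [IsDomain R] (a : R) (i j : ℕ) :
    (Polynomial.X ^ i * (Polynomial.C a - Polynomial.X) ^ j).degree =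
      ((i + j : ℕ) : WithBot ℕ) := by
  have hdeg : (Polynomial.C a - Polynomial.X).degree = 1 := by
    rw [← neg_sub, Polynomial.degree_neg, Polynomial.degree_X_sub_C]
  simp [hdeg]

theorem algebraMap_ne_zero_of_constantCoeff_ne_zero {σ R : Type*} [CommRing R] [IsDomain R]
    {p : MvPolynomial σ R} (hp : constantCoeff p ≠ 0) :
    algebraMap (MvPolynomial σ R) (FractionRing (MvPolynomial σ R)) p ≠ 0 := by
  rw [Ne, FaithfulSMul.algebraMap_eq_zero_iff]
  rintro rfl
  exact hp (map_zero _)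

section Span

/-- The forms of degree `m` in `x` and `y`, multiplied by `w`: the shape of `V₀`. -/
def formSpan (R : Type*) {A : Type*} [CommSemiring R] [CommSemiring A] [Algebra R A]
    (x y w : A) (m : ℕ) : Submodule R A :=
  Submodule.span R {f | ∃ i ≤ m, f = x ^ i * y ^ (m - i) * w}

/-- The span of the monomials in `x` and `y` of weight `e` (where `x` has weight `1` and `y` has
weight `-1`) and degree less than `N`, multiplied by `w`: the common shape of `V₊` and `V₋`.
The strict bound avoids a truncated subtraction `m - 1` in the case of `V₋`. -/
def weightSpan (R : Type*) {A : Type*} [CommSemiring R] [CommSemiring A] [Algebra R A]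
    (x y w : A) (e : ℤ) (N : ℕ) : Submodule R A :=
  Submodule.span R {f | ∃ i j : ℕ, i + j < N ∧ (i : ℤ) - j = e ∧ f = x ^ i * y ^ j * w}

variable {R A : Type*} [CommSemiring R] [CommSemiring A] [Algebra R A]

theorem formSpan_comm (x y w : A) (m : ℕ) : formSpan R x y w m = formSpan R y x w m := by
  suffices h : ∀ x y : A, formSpan R x y w m ≤ formSpan R y x w m from (h x y).antisymm (h y x)
  refine fun x y ↦ Submodule.span_le.mpr ?_
  rintro _ ⟨i, hi, rfl⟩
  refine Submodule.subset_span ⟨m - i, m.sub_le i, ?_⟩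
  rw [Nat.sub_sub_self hi, mul_comm (x ^ i)]

theorem monomial_mem_weightSpan {x y w : A} {e : ℤ} {i j N : ℕ} (hN : i + j < N)
    (he : (i : ℤ) - j = e) : x ^ i * y ^ j * w ∈ weightSpan R x y w e N :=
  Submodule.subset_span ⟨i, j, hN, he, rfl⟩

end Span

section ConstantSum

variable {R A : Type*} [CommRing R] [CommRing A] [Algebra R A] {x y : A} {a : R}

theorem monomial_mem_formSpan (ha : IsUnit a) (hxy : x + y = algebraMap R A a) (w : A) {i j m : ℕ}
    (hm : i + j ≤ m) : x ^ i * y ^ j * w ∈ formSpan R x y w m := by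
  obtain ⟨d, rfl⟩ := Nat.exists_eq_add_of_le hm
  induction d generalizing i j with
  | zero => exact Submodule.subset_span ⟨i, by omega, by rw [add_zero, Nat.add_sub_cancel_left]⟩
  | succ d ih =>
    have hleft := ih (i := i + 1) (j := j) (by omega)
    have hright := ih (i := i) (j := j + 1) (by omega)
    rw [show i + 1 + j + d = i + j + (d + 1) by omega] at hleft
    rw [show i + (j + 1) + d = i + j + (d + 1) by omega] at hright
    have hsplit : a • (x ^ i * y ^ j * w) =
        x ^ (i + 1) * y ^ j * w + x ^ i * y ^ (j + 1) * w := by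
      rw [Algebra.smul_def, ← hxy]
      ring
    rw [← Submodule.smul_mem_iff_of_isUnit _ ha, hsplit]
    exact add_mem hleft hright

theorem weightSpan_le_formSpan (ha : IsUnit a) (hxy : x + y = algebraMap R A a) (w : A) (e : ℤ)
    (m : ℕ) : weightSpan R x y w e (m + 1) ≤ formSpan R x y w m := by
  refine Submodule.span_le.mpr ?_
  rintro _ ⟨i, j, hm, -, rfl⟩
  exact monomial_mem_formSpan ha hxy w (by omega)

theorem weightSpan_sub_mul_le_formSpan (ha : IsUnit a) (hxy : x + y = algebraMap R A a) (w : A)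
    (e : ℤ) (m : ℕ) : weightSpan R x y ((y - x) * w) e m ≤ formSpan R x y w m := by
  refine Submodule.span_le.mpr ?_
  rintro _ ⟨i, j, hm, -, rfl⟩
  have hexpand : x ^ i * y ^ j * ((y - x) * w) =
      x ^ i * y ^ (j + 1) * w - x ^ (i + 1) * y ^ j * w := by ring
  rw [hexpand]
  exact sub_mem (monomial_mem_formSpan ha hxy w (by omega))
    (monomial_mem_formSpan ha hxy w (by omega))

theorem exists_aeval_mul_eq_of_mem_formSpan [IsDomain R] (hxy : x + y = algebraMap R A a)
    {w f : A} {m : ℕ} (hf : f ∈ formSpan R x y w m) :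
    ∃ p : Polynomial R, p.degree ≤ m ∧ Polynomial.aeval x p * w = f := by
  suffices h : formSpan R x y w m ≤ (Polynomial.degreeLE R m).map
      (LinearMap.mulRight R w ∘ₗ (Polynomial.aeval x).toLinearMap) by
    obtain ⟨p, hp, hpf⟩ := h hf
    exact ⟨p, Polynomial.mem_degreeLE.mp hp, hpf⟩
  refine Submodule.span_le.mpr ?_
  rintro _ ⟨i, hi, rfl⟩
  refine ⟨Polynomial.X ^ i * (Polynomial.C a - Polynomial.X) ^ (m - i), ?_, ?_⟩
  · rw [SetLike.mem_coe, Polynomial.mem_degreeLE, degree_X_pow_mul_C_sub_X_pow,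
      Nat.add_sub_cancel' hi]
  · simp [← hxy]

theorem pow_mul_monomial_mem_sup (h2 : IsUnit (2 : R)) (hxy : x + y = algebraMap R A a) (w : A)
    {e : ℤ} {m : ℕ} (r : ℕ) {i j : ℕ} (hm : r + i + j ≤ m) (he : (i : ℤ) - j = e) :
    x ^ r * (x ^ i * y ^ j * w) ∈
      weightSpan R x y w e (m + 1) ⊔ weightSpan R x y ((y - x) * w) e m := by
  induction r using Nat.twoStepInduction generalizing i j with
  | zero =>
    rw [pow_zero, one_mul]
    exact Submodule.mem_sup_left (monomial_mem_weightSpan (by omega) he)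
  | one =>
    have hsplit : (2 : R) • (x ^ 1 * (x ^ i * y ^ j * w)) =
        a • (x ^ i * y ^ j * w) - x ^ i * y ^ j * ((y - x) * w) := by
      rw [Algebra.smul_def, Algebra.smul_def, ← hxy, map_ofNat]
      ring
    rw [← Submodule.smul_mem_iff_of_isUnit _ h2, hsplit]
    exact sub_mem
      (Submodule.smul_mem _ _ (Submodule.mem_sup_left (monomial_mem_weightSpan (by omega) he)))
      (Submodule.mem_sup_right (monomial_mem_weightSpan (by omega) he))
  | more r ih₀ ih₁ =>
    have hsplit : x ^ (r + 2) * (x ^ i * y ^ j * w) =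
        a • (x ^ (r + 1) * (x ^ i * y ^ j * w)) - x ^ r * (x ^ (i + 1) * y ^ (j + 1) * w) := by
      rw [Algebra.smul_def, ← hxy]
      ring
    rw [hsplit]
    exact sub_mem (Submodule.smul_mem _ _ (ih₁ (by omega) he))
      (ih₀ (by omega) (by push_cast; linarith))

theorem aeval_mul_monomial_mem_sup (h2 : IsUnit (2 : R)) (hxy : x + y = algebraMap R A a) (w : A)
    {e : ℤ} {i j m : ℕ} (he : (i : ℤ) - j = e) {s : Polynomial R}
    (hs : ((i + j : ℕ) : WithBot ℕ) + s.degree ≤ m) :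
    Polynomial.aeval x s * (x ^ i * y ^ j * w) ∈
      weightSpan R x y w e (m + 1) ⊔ weightSpan R x y ((y - x) * w) e m := by
  rw [Polynomial.aeval_eq_sum_range, Finset.sum_mul]
  refine sum_mem fun r _ ↦ ?_
  rw [smul_mul_assoc]
  by_cases hr : s.coeff r = 0
  · rw [hr, zero_smul]
    exact zero_mem _
  · have hdeg : ((i + j + r : ℕ) : WithBot ℕ) ≤ m := by
      rw [Nat.cast_add]
      exact (add_le_add_right (Polynomial.le_degree_of_ne_zero hr) _).trans hs
    have hm : i + j + r ≤ m := by exact_mod_cast hdeg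
    exact Submodule.smul_mem _ _ (pow_mul_monomial_mem_sup h2 hxy w r (by omega) he)

end ConstantSum

section Involution

theorem weightSpan_le_eigenspace {R K : Type*} [CommRing R] [Field K] [Algebra R K] {x y w : K}
    {c : R} {e : ℤ} {ι : K →ₐ[R] K} (hx : x ≠ 0) (hy : y ≠ 0) (hιx : ι x = y) (hιy : ι y = x)
    (hιw : ι w = c • ((x / y) ^ e * w)) (N : ℕ) :
    weightSpan R x y w e N ≤ Module.End.eigenspace ι.toLinearMap c := by
  refine Submodule.span_le.mpr ?_
  rintro _ ⟨i, j, -, rfl, rfl⟩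
  rw [SetLike.mem_coe, Module.End.mem_eigenspace_iff, AlgHom.toLinearMap_apply, map_mul, map_mul,
    map_pow, map_pow, hιx, hιy, hιw, mul_smul_comm, zpow_sub₀ (div_ne_zero hx hy), zpow_natCast,
    zpow_natCast, div_pow, div_pow]
  congr 1
  field_simp

variable {k K : Type*} [Field k] [Field K] [Algebra k K] {x y w : K} {a c : k} {e : ℤ}
  {ι : K →ₐ[k] K}

theorem exists_aeval_mul_monomial_eq (ha : a ≠ 0) (hx : Transcendental k x)
    (hxy : x + y = algebraMap k K a) (hw : w ≠ 0) (hιx : ι x = y) (hc : c ≠ 0)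
    (hιw : ι w = c • ((x / y) ^ e * w)) {m : ℕ} {f : K} (hf : f ∈ formSpan k x y w m)
    (hιf : ι f ∈ formSpan k x y w m) :
    ∃ (i j : ℕ) (s : Polynomial k), (i : ℤ) - j = e ∧
      ((i + j : ℕ) : WithBot ℕ) + s.degree ≤ m ∧
      f = Polynomial.aeval x s * (x ^ i * y ^ j * w) := by
  have hy : Transcendental k y := hιx ▸ mt (isAlgebraic_algHom_iff ι ι.injective).mp hx
  have hx₀ : x ≠ 0 := ne_zero_of_transcendental hx
  have hy₀ : y ≠ 0 := ne_zero_of_transcendental hy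
  obtain ⟨i, j, he, hij⟩ : ∃ i j : ℕ, (i : ℤ) - j = e ∧ (i = 0 ∨ j = 0) :=
    ⟨e.toNat, (-e).toNat, e.toNat_sub_toNat_neg, by omega⟩
  obtain ⟨p, hpdeg, rfl⟩ := exists_aeval_mul_eq_of_mem_formSpan hxy hf
  rw [formSpan_comm] at hιf
  obtain ⟨q, -, hq⟩ := exists_aeval_mul_eq_of_mem_formSpan (add_comm x y ▸ hxy) hιf
  have hpq : c • (Polynomial.aeval y p * (x / y) ^ e) = Polynomial.aeval y q := by
    apply mul_right_cancel₀ hw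
    rw [hq, map_mul, ← Polynomial.aeval_algHom_apply, hιx, hιw, mul_smul_comm, smul_mul_assoc,
      mul_assoc]
  have hpoly : p * (Polynomial.X ^ j * (Polynomial.C a - Polynomial.X) ^ i) =
      (c⁻¹ • q) * (Polynomial.X ^ i * (Polynomial.C a - Polynomial.X) ^ j) := by
    apply transcendental_iff_injective.mp hy
    simp only [map_mul, map_pow, map_sub, map_smul, Polynomial.aeval_X, Polynomial.aeval_C, ← hxy,
      add_sub_cancel_right, ← hpq, inv_smul_smul₀ hc]
    rw [← he, zpow_sub₀ (div_ne_zero hx₀ hy₀), zpow_natCast, zpow_natCast, div_pow, div_pow]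
    field_simp
  obtain ⟨s, rfl⟩ := pow_mul_pow_dvd_of_mul_eq_mul (isCoprime_X_C_sub_X ha.isUnit) hij hpoly
  refine ⟨i, j, s, he, ?_, ?_⟩
  · rwa [Polynomial.degree_mul, degree_X_pow_mul_C_sub_X_pow] at hpdeg
  · simp only [map_mul, map_pow, map_sub, Polynomial.aeval_X, Polynomial.aeval_C, ← hxy,
      add_sub_cancel_left]
    ring

theorem V1_direct_sum_general [NeZero (2 : k)] (ha : a ≠ 0) (hx : Transcendental k x)
    (hxy : x + y = algebraMap k K a) (hw : w ≠ 0) (hιx : ι x = y)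
    (hιw : ι w = c • ((x / y) ^ e * w)) (m : ℕ) :
    weightSpan k x y w e (m + 1) ⊓ weightSpan k x y ((y - x) * w) e m = ⊥ ∧
      weightSpan k x y w e (m + 1) ⊔ weightSpan k x y ((y - x) * w) e m =
        formSpan k x y w m ⊓ (formSpan k x y w m).comap ι.toLinearMap := by
  have hx₀ : x ≠ 0 := ne_zero_of_transcendental hx
  have hy₀ : y ≠ 0 := hιx ▸ (map_ne_zero ι).mpr hx₀
  have hιy : ι y = x := by
    rw [← add_sub_cancel_left x y, hxy, map_sub, AlgHom.commutes, hιx, ← hxy, add_sub_cancel_right]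
  have hc : c ≠ 0 := left_ne_zero_of_smul (hιw ▸ (map_ne_zero ι).mpr hw)
  have hιw' : ι ((y - x) * w) = (-c) • ((x / y) ^ e * ((y - x) * w)) := by
    rw [map_mul, map_sub, hιx, hιy, hιw, mul_smul_comm, neg_smul, ← smul_neg]
    congr 1
    ring
  have hplus := weightSpan_le_eigenspace hx₀ hy₀ hιx hιy hιw (m + 1)
  have hminus := weightSpan_le_eigenspace hx₀ hy₀ hιx hιy hιw' m
  have hplus₀ := weightSpan_le_formSpan ha.isUnit hxy w e m
  have hminus₀ := weightSpan_sub_mul_le_formSpan ha.isUnit hxy w e m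
  refine ⟨?_, le_antisymm (sup_le ?_ ?_) ?_⟩
  · have hne : c ≠ -c := by
      rwa [Ne, eq_neg_iff_add_eq_zero, ← two_mul, mul_eq_zero_iff_left two_ne_zero]
    exact ((Module.End.disjoint_genEigenspace _ hne 1 1).mono hplus hminus).eq_bot
  · exact le_inf hplus₀ (le_comap_of_le_eigenspace hplus₀ hplus)
  · exact le_inf hminus₀ (le_comap_of_le_eigenspace hminus₀ hminus)
  · rintro f ⟨hf, hιf⟩
    obtain ⟨i, j, s, he, hs, rfl⟩ :=
      exists_aeval_mul_monomial_eq ha hx hxy hw hιx hc hιw hf hιf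
    exact aeval_mul_monomial_mem_sup (NeZero.ne (2 : k)).isUnit hxy w he hs

end Involution

section Moduli

/-- The factor `z₂ⁿ(Δ₁Δ₂)^{-(2g-2)}` common to all generators of `V₀`, `V₊` and `V₋`. -/
def commonFactor (g : ℤ) (n : ℕ) : K2 := z2 ^ n * (Δ1 * Δ2) ^ (-(2 * g - 2))

theorem transcendental_z1 : Transcendental ℂ z1 :=
  (transcendental_algebraMap_iff (IsFractionRing.injective _ _)).mpr (transcendental_X ℂ 0)

theorem z1_ne_zero : z1 ≠ 0 := ne_zero_of_transcendental transcendental_z1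

theorem z1_add_eq : z1 + (1 / 432 - z1) = algebraMap ℂ K2 (1 / 432) := by
  rw [add_sub_cancel, map_div₀, map_one, map_ofNat]

theorem Δ1_eq : Δ1 = 432 ^ 3 * ((1 / 432 - z1) ^ 3 - 27 * z1 ^ 3 * z2) := by
  rw [Δ1]
  ring

theorem z2_ne_zero : z2 ≠ 0 := by
  rw [z2, Ne, FaithfulSMul.algebraMap_eq_zero_iff]
  exact X_ne_zero 1

theorem one_div_sub_z1_ne_zero : 1 / 432 - z1 ≠ 0 := by
  have h := algebraMap_ne_zero_of_constantCoeff_ne_zero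
    (p := (C (1 / 432) - X 0 : MvPolynomial (Fin 2) ℂ)) (by simp)
  have hC : algebraMap (MvPolynomial (Fin 2) ℂ) K2 (C (1 / 432)) = 1 / 432 := by
    rw [← algebraMap_eq, ← IsScalarTower.algebraMap_apply, map_div₀, map_one, map_ofNat]
  rwa [map_sub, hC] at h

theorem Δ1_ne_zero : Δ1 ≠ 0 := by
  have h := algebraMap_ne_zero_of_constantCoeff_ne_zero
    (p := ((1 - 432 * X 0) ^ 3 - 27 * (432 * X 0) ^ 3 * X 1 : MvPolynomial (Fin 2) ℂ)) (by simp)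
  simpa only [Δ1, z1, z2, map_sub, map_mul, map_pow, map_one, map_ofNat] using h

theorem Δ2_ne_zero : Δ2 ≠ 0 := by
  have h := algebraMap_ne_zero_of_constantCoeff_ne_zero
    (p := (1 + 27 * X 1 : MvPolynomial (Fin 2) ℂ)) (by simp)
  simpa only [Δ2, z2, map_add, map_mul, map_one, map_ofNat] using h

theorem commonFactor_ne_zero (g : ℤ) (n : ℕ) : commonFactor g n ≠ 0 :=
  mul_ne_zero (pow_ne_zero _ z2_ne_zero) (zpow_ne_zero _ (mul_ne_zero Δ1_ne_zero Δ2_ne_zero))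

theorem V0_eq_formSpan (g : ℤ) (m n : ℕ) :
    V0 g m n = formSpan ℂ z1 (1 / 432 - z1) (commonFactor g n) m := by
  simp only [V0, formSpan, commonFactor, mul_assoc]

theorem Vplus_eq_weightSpan (g : ℤ) (m n : ℕ) : Vplus g m n =
    weightSpan ℂ z1 (1 / 432 - z1) (commonFactor g n) (3 * n - 6 * g + 6) (m + 1) := by
  simp only [Vplus, weightSpan, commonFactor, mul_assoc, Nat.lt_succ_iff]

theorem Vminus_eq_weightSpan (g : ℤ) (m n : ℕ) : Vminus g m n =
    weightSpan ℂ z1 (1 / 432 - z1) ((1 / 432 - z1 - z1) * commonFactor g n)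
      (3 * n - 6 * g + 6) m := by
  have hgen (i j : ℕ) : (1 / 432 - 2 * z1) * z1 ^ i * (1 / 432 - z1) ^ j * z2 ^ n *
        (Δ1 * Δ2) ^ (-(2 * g - 2)) =
      z1 ^ i * (1 / 432 - z1) ^ j * ((1 / 432 - z1 - z1) * commonFactor g n) := by
    rw [commonFactor]
    ring
  simp only [Vminus, weightSpan, hgen, Nat.succ_le_iff]

theorem z1_div_pow_mul_pow (d : ℕ) :
    (z1 / (1 / 432 - z1)) ^ d * (1 / 432 - z1) ^ d = z1 ^ d := by
  rw [← mul_pow, div_mul_cancel₀ _ one_div_sub_z1_ne_zero]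

variable {ι : K2 →ₐ[ℂ] K2}

theorem map_one_div_sub_z1 (h1 : ι z1 = 1 / 432 - z1) :
    ι (1 / 432 - z1) = z1 := by
  rw [map_sub, h1, map_div₀, map_one, map_ofNat, sub_sub_cancel]

theorem map_z2 (h2 : ι z2 = -((432 * z1) ^ 3 * z2) / (1 - 432 * z1) ^ 3) :
    ι z2 = -((z1 / (1 / 432 - z1)) ^ 3 * z2) := by
  have h432 : (432 : K2) ≠ 0 := by norm_num
  rw [h2, ← mul_div_mul_left z1 (1 / 432 - z1) h432, div_pow]
  ring

theorem map_Δ2 (h2 : ι z2 = -((432 * z1) ^ 3 * z2) / (1 - 432 * z1) ^ 3) :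
    ι Δ2 = Δ1 / (432 * (1 / 432 - z1)) ^ 3 := by
  rw [Δ1_eq, Δ2, map_add, map_mul, map_one, map_ofNat, map_z2 h2,
    eq_div_iff (pow_ne_zero 3 (mul_ne_zero (by norm_num) one_div_sub_z1_ne_zero))]
  linear_combination (-432 ^ 3 * 27 * z2) * z1_div_pow_mul_pow 3

theorem map_Δ1 (h1 : ι z1 = 1 / 432 - z1)
    (h2 : ι z2 = -((432 * z1) ^ 3 * z2) / (1 - 432 * z1) ^ 3) :
    ι Δ1 = (432 * z1) ^ 3 * Δ2 := by
  rw [Δ1_eq, Δ2, map_mul, map_sub, map_mul, map_mul, map_pow, map_pow, map_pow, map_ofNat,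
    map_ofNat, map_one_div_sub_z1 h1, h1, map_z2 h2]
  linear_combination 432 ^ 3 * 27 * z2 * z1_div_pow_mul_pow 3

theorem map_Δ1_mul_Δ2 (h1 : ι z1 = 1 / 432 - z1)
    (h2 : ι z2 = -((432 * z1) ^ 3 * z2) / (1 - 432 * z1) ^ 3) :
    ι (Δ1 * Δ2) = (z1 / (1 / 432 - z1)) ^ 3 * (Δ1 * Δ2) := by
  have h432 : (432 : K2) ≠ 0 := by norm_num
  rw [map_mul, map_Δ1 h1 h2, map_Δ2 h2, ← mul_div_mul_left z1 (1 / 432 - z1) h432, div_pow]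
  ring

theorem map_commonFactor (h1 : ι z1 = 1 / 432 - z1)
    (h2 : ι z2 = -((432 * z1) ^ 3 * z2) / (1 - 432 * z1) ^ 3) (g : ℤ) (n : ℕ) :
    ι (commonFactor g n) =
      (-1 : ℂ) ^ n • ((z1 / (1 / 432 - z1)) ^ (3 * n - 6 * g + 6) * commonFactor g n) := by
  have hratio : z1 / (1 / 432 - z1) ≠ 0 := div_ne_zero z1_ne_zero one_div_sub_z1_ne_zero
  have hexp : 3 * (n : ℤ) - 6 * g + 6 = 3 * n + 3 * (-(2 * g - 2)) := by ring
  rw [commonFactor, map_mul, map_pow, map_zpow₀, map_Δ1_mul_Δ2 h1 h2, map_z2 h2, hexp,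
    zpow_add₀ hratio, zpow_mul, zpow_mul, mul_zpow, neg_pow, mul_pow, Algebra.smul_def, map_pow,
    map_neg, map_one]
  norm_cast
  ring

end Moduli

/-- `V₁^{(g,m,n)}` is the internal direct sum of `V₊^{(g,m,n)}` and `V₋^{(g,m,n)}`. -/
theorem V1_direct_sum (ι : K2 →ₐ[ℂ] K2)
    (h1 : ι z1 = 1 / 432 - z1)
    (h2 : ι z2 = -((432 * z1) ^ 3 * z2) / (1 - 432 * z1) ^ 3)
    (g : ℤ) (hg : 1 ≤ g) (m n : ℕ) :
    Vplus g m n ⊓ Vminus g m n = ⊥ ∧ Vplus g m n ⊔ Vminus g m n = V1 ι g m n := by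
  rw [Vplus_eq_weightSpan, Vminus_eq_weightSpan, V1, V0_eq_formSpan]
  exact V1_direct_sum_general (by norm_num) transcendental_z1 z1_add_eq (commonFactor_ne_zero g n)
    h1 (map_commonFactor h1 h2 g n) m

end
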